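/- Fractional inverse inequality for piecewise polynomials in 1D: let 0 < s < 1 and 1 ≤ p < ∞ with sp < 1, let 0 = x₀ < x₁ < ... < x_N = 1 be the uniform mesh with mesh size h = 1/N, and let v be a continuous piecewise polynomial of degree at most m on this mesh. Then the Gagliardo seminorm satisfies [v]_{W^{s,p}(0,1)} ≤ C h^{-s} ‖v‖_{L^p(0,1)}, with C independent of h and v. -/

import Mathlib

open MeasureTheory Set

/-! Write the seminorm as an integral over the shift `r = y - x` of `‖v (· + r) - v‖_p ^ p` against
the weight `|r| ^ (-1 - s p)`. For `|r| ≥ h` the increment is bounded by `2 ‖v‖_p`, and the weight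
integrates to a multiple of `h ^ (-s p)`. For `|r| < h` it is bounded by `|r| ‖∂v‖_p`, and
`|r| ^ (p - 1 - s p)` integrates to a multiple of `h ^ (p - s p)`; the classical inverse inequality
`‖∂v‖_p ≤ C h⁻¹ ‖v‖_p`, which is equivalence of norms on polynomials of degree at most `m` on the
unit interval rescaled to each cell, turns this into the same power of `h`. -/

open scoped ENNReal NNReal Polynomial

section Polynomial

lemma exists_enorm_map_le_of_injective {𝕜 V W U : Type*} [NontriviallyNormedField 𝕜]
    [CompleteSpace 𝕜] [AddCommGroup V] [Module 𝕜 V] [FiniteDimensional 𝕜 V]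
    [SeminormedAddCommGroup W] [NormedSpace 𝕜 W] [NormedAddCommGroup U] [NormedSpace 𝕜 U]
    (f : V →ₗ[𝕜] W) {g : V →ₗ[𝕜] U} (hg : Function.Injective g) :
    ∃ C : ℝ≥0, ∀ x, ‖f x‖ₑ ≤ C * ‖g x‖ₑ := by
  let e := LinearEquiv.ofInjective g hg
  let T : LinearMap.range g →L[𝕜] W := (f ∘ₗ e.symm.toLinearMap).toContinuousLinearMap
  refine ⟨‖T‖₊, fun x ↦ ?_⟩
  have hTx : T (e x) = f x := by simp [T]
  exact hTx ▸ T.le_opENorm (e x)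

lemma memLp_restrict_of_isCompact {X E : Type*} [TopologicalSpace X] [T2Space X]
    [MeasurableSpace X] [OpensMeasurableSpace X] [NormedAddCommGroup E]
    [SecondCountableTopologyEither X E] {μ : Measure X} [IsFiniteMeasureOnCompacts μ] {K : Set X}
    {f : X → E} {q : ℝ≥0∞} (hK : IsCompact K) (hf : ContinuousOn f K) :
    MemLp f q (μ.restrict K) := by
  have : IsFiniteMeasure (μ.restrict K) := isFiniteMeasure_restrict.2 hK.measure_lt_top.ne
  obtain ⟨M, hM⟩ := hK.exists_bound_of_continuousOn hf
  exact MemLp.of_bound (hf.aestronglyMeasurable hK.measurableSet) M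
    ((ae_restrict_iff' hK.measurableSet).2 (.of_forall hM))

/-- Evaluation of polynomials as a linear map into `L^q(μ)`, for a measure `μ` on the line with
finite `q`-th moments. -/
noncomputable def polynomialToLp {q : ℝ≥0∞} {μ : Measure ℝ}
    (hμ : ∀ P : ℝ[X], MemLp (fun t ↦ P.eval t) q μ) : ℝ[X] →ₗ[ℝ] Lp ℝ q μ where
  toFun P := (hμ P).toLp
  map_add' P Q := by
    rw [← MemLp.toLp_add]
    exact MemLp.toLp_congr _ _ (by simp [Pi.add_def])
  map_smul' c P := by
    rw [RingHom.id_apply, ← MemLp.toLp_const_smul]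
    exact MemLp.toLp_congr _ _ (by simp [Pi.smul_def])

lemma polynomialToLp_injective {q : ℝ≥0∞} {μ : Measure ℝ} [NeZero μ] [NullSingletonClass μ]
    (hμ : ∀ P : ℝ[X], MemLp (fun t ↦ P.eval t) q μ) :
    Function.Injective (polynomialToLp hμ) := by
  refine (injective_iff_map_eq_zero _).2 fun P hP ↦ ?_
  by_contra hP0
  have hvanish : ∀ᵐ t ∂μ, P.IsRoot t := by
    filter_upwards [(hμ P).coeFn_toLp, Lp.eq_zero_iff_ae_eq_zero.1 hP] with t ht ht0
    exact ht.symm.trans ht0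
  have hnonroot : ∀ᵐ t ∂μ, ¬ P.IsRoot t :=
    measure_eq_zero_iff_ae_notMem.1 ((Polynomial.finite_setOfPred_isRoot hP0).measure_zero μ)
  obtain ⟨t, ht, ht'⟩ := (hvanish.and hnonroot).exists
  exact ht' ht

lemma exists_eLpNorm_eval_map_le {q : ℝ≥0∞} [Fact (1 ≤ q)] {μ : Measure ℝ} [NeZero μ]
    [NullSingletonClass μ] (hμ : ∀ P : ℝ[X], MemLp (fun t ↦ P.eval t) q μ)
    (T : ℝ[X] →ₗ[ℝ] ℝ[X]) (m : ℕ) :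
    ∃ C : ℝ≥0, ∀ P : ℝ[X], P.natDegree ≤ m →
      eLpNorm (fun t ↦ (T P).eval t) q μ ≤ C * eLpNorm (fun t ↦ P.eval t) q μ := by
  let ι := (Polynomial.degreeLT ℝ (m + 1)).subtype
  have : FiniteDimensional ℝ (Polynomial.degreeLT ℝ (m + 1)) :=
    (Polynomial.degreeLTEquiv ℝ (m + 1)).symm.finiteDimensional
  obtain ⟨C, hC⟩ := exists_enorm_map_le_of_injective (polynomialToLp hμ ∘ₗ T ∘ₗ ι)
    (g := polynomialToLp hμ ∘ₗ ι)
    ((polynomialToLp_injective hμ).comp (Submodule.subtype_injective _))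
  refine ⟨C, fun P hP ↦ ?_⟩
  have hP' : P ∈ Polynomial.degreeLT ℝ (m + 1) :=
    Polynomial.mem_degreeLT.2 <| P.degree_le_natDegree.trans_lt <| by exact_mod_cast by omega
  simpa [ι, polynomialToLp, Lp.enorm_toLp] using hC ⟨P, hP'⟩

lemma exists_lintegral_Icc_zero_one_eval_derivative_le {p : ℝ} (hp : 1 ≤ p) (m : ℕ) :
    ∃ C : ℝ≥0, ∀ P : ℝ[X], P.natDegree ≤ m →
      ∫⁻ t in Icc (0 : ℝ) 1, ‖P.derivative.eval t‖ₑ ^ p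
        ≤ C * ∫⁻ t in Icc (0 : ℝ) 1, ‖P.eval t‖ₑ ^ p := by
  have hp0 : 0 < p := by linarith
  have : Fact (1 ≤ ENNReal.ofReal p) := ⟨ENNReal.one_le_ofReal.2 hp⟩
  have : NeZero (volume.restrict (Icc (0 : ℝ) 1)) := ⟨by simp⟩
  obtain ⟨C, hC⟩ := exists_eLpNorm_eval_map_le (q := ENNReal.ofReal p)
    (μ := volume.restrict (Icc (0 : ℝ) 1))
    (fun P ↦ memLp_restrict_of_isCompact isCompact_Icc P.continuous.continuousOn)
    Polynomial.derivative m
  refine ⟨C ^ p, fun P hP ↦ ?_⟩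
  have hLp (Q : ℝ[X]) : ∫⁻ t in Icc (0 : ℝ) 1, ‖Q.eval t‖ₑ ^ p
      = eLpNorm (fun t ↦ Q.eval t) (ENNReal.ofReal p) (volume.restrict (Icc 0 1)) ^ p := by
    rw [lintegral_rpow_enorm_eq_rpow_eLpNorm' hp0,
      eLpNorm_eq_eLpNorm' (by simpa using hp0) ENNReal.ofReal_ne_top, ENNReal.toReal_ofReal hp0.le]
  rw [hLp, hLp, ENNReal.coe_rpow_of_nonneg _ hp0.le, ← ENNReal.mul_rpow_of_nonneg _ _ hp0.le]
  gcongr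
  exact hC P hP

lemma lintegral_Icc_eq_lintegral_Icc_zero_one {a b : ℝ} (hab : a < b) (f : ℝ → ℝ≥0∞) :
    ∫⁻ t in Icc a b, f t
      = ENNReal.ofReal (b - a) * ∫⁻ t in Icc (0 : ℝ) 1, f ((b - a) * t + a) := by
  have hba : 0 < b - a := sub_pos.2 hab
  have himage : (fun t ↦ (b - a) * t + a) '' Icc 0 1 = Icc a b := by
    simp [image_affine_Icc' hba]
  have hinj : InjOn (fun t ↦ (b - a) * t + a) (Icc 0 1) := fun x _ y _ hxy ↦ by
    simpa [hba.ne'] using hxy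
  rw [← himage, lintegral_image_eq_lintegral_abs_deriv_mul measurableSet_Icc
    (fun x _ ↦ (((hasDerivAt_id' x).const_mul (b - a)).add_const a).hasDerivWithinAt) hinj]
  simp only [mul_one, abs_of_pos hba]
  exact lintegral_const_mul' _ _ ENNReal.ofReal_ne_top

theorem exists_lintegral_eval_derivative_le {p : ℝ} (hp : 1 ≤ p) (m : ℕ) :
    ∃ C : ℝ≥0, ∀ P : ℝ[X], P.natDegree ≤ m → ∀ a b : ℝ, a < b →
      ∫⁻ t in Icc a b, ‖P.derivative.eval t‖ₑ ^ p
        ≤ C * ENNReal.ofReal (b - a) ^ (-p) * ∫⁻ t in Icc a b, ‖P.eval t‖ₑ ^ p := by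
  have hp0 : 0 ≤ p := by linarith
  obtain ⟨C, hC⟩ := exists_lintegral_Icc_zero_one_eval_derivative_le hp m
  refine ⟨C, fun P hP a b hab ↦ ?_⟩
  set δ := ENNReal.ofReal (b - a) with hδ
  have hδ0 : δ ≠ 0 := by simpa [hδ] using hab
  have hδtop : δ ≠ ∞ := ENNReal.ofReal_ne_top
  let Q : ℝ[X] := P.comp (.C (b - a) * .X + .C a)
  have hQ : Q.natDegree ≤ m := by
    rwa [Polynomial.natDegree_comp, Polynomial.natDegree_linear (sub_pos.2 hab).ne', mul_one]
  have hQeval (t : ℝ) : Q.eval t = P.eval ((b - a) * t + a) := by simp [Q]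
  have hQderiv (t : ℝ) :
      ‖P.derivative.eval ((b - a) * t + a)‖ₑ ^ p = δ ^ (-p) * ‖Q.derivative.eval t‖ₑ ^ p := by
    have : ‖Q.derivative.eval t‖ₑ = δ * ‖P.derivative.eval ((b - a) * t + a)‖ₑ := by
      rw [hδ, ← Real.enorm_eq_ofReal (sub_pos.2 hab).le, ← enorm_mul]
      simp [Q, Polynomial.derivative_comp]
    rw [this, ENNReal.mul_rpow_of_nonneg _ _ hp0, ← mul_assoc, ENNReal.rpow_neg,
      ENNReal.inv_mul_cancel (by simp [hδ0, hδtop]) (by simp [hδ0, hδtop]), one_mul]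
  calc ∫⁻ t in Icc a b, ‖P.derivative.eval t‖ₑ ^ p
      = δ * (δ ^ (-p) * ∫⁻ t in Icc (0 : ℝ) 1, ‖Q.derivative.eval t‖ₑ ^ p) := by
        rw [lintegral_Icc_eq_lintegral_Icc_zero_one hab]
        simp only [hQderiv]
        rw [lintegral_const_mul' _ _ (by simp [hδ0, hδtop])]
    _ ≤ δ * (δ ^ (-p) * (C * ∫⁻ t in Icc (0 : ℝ) 1, ‖Q.eval t‖ₑ ^ p)) := by
        gcongr
        exact hC Q hQ
    _ = C * δ ^ (-p) * ∫⁻ t in Icc a b, ‖P.eval t‖ₑ ^ p := by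
        rw [lintegral_Icc_eq_lintegral_Icc_zero_one hab]
        simp only [hQeval]
        ring

end Polynomial

section Mesh

/-- `v` agrees with a polynomial of degree at most `m` on each of the `N` closed cells
`[x k, x (k + 1)]` of the mesh with nodes `x 0, …, x N`; the values `x k` for `k > N` are
irrelevant. -/
def IsPiecewisePolynomial (m N : ℕ) (x : ℕ → ℝ) (v : ℝ → ℝ) : Prop :=
  ∀ k < N, ∃ P : ℝ[X], P.natDegree ≤ m ∧ ∀ t ∈ Icc (x k) (x (k + 1)), v t = P.eval t

variable {m N : ℕ} {x : ℕ → ℝ} {v : ℝ → ℝ}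

lemma exists_mem_Ioc_succ {α : Type*} [LinearOrder α] {x : ℕ → α} {N : ℕ} {t : α}
    (ht : t ∈ Ioc (x 0) (x N)) : ∃ k < N, t ∈ Ioc (x k) (x (k + 1)) := by
  induction N with
  | zero => simp at ht
  | succ n ih =>
    rcases le_or_gt t (x n) with htn | htn
    · obtain ⟨k, hk, htk⟩ := ih ⟨ht.1, htn⟩
      exact ⟨k, hk.trans n.lt_succ_self, htk⟩
    · exact ⟨n, n.lt_succ_self, htn, ht.2⟩

lemma lintegral_Icc_le_of_forall_cell {μ : Measure ℝ} [NullSingletonClass μ] {f g : ℝ → ℝ≥0∞}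
    {C : ℝ≥0∞} (hx : ∀ k < N, x k ≤ x (k + 1))
    (hfg : ∀ k < N, ∫⁻ t in Icc (x k) (x (k + 1)), f t ∂μ
      ≤ C * ∫⁻ t in Icc (x k) (x (k + 1)), g t ∂μ) :
    ∫⁻ t in Icc (x 0) (x N), f t ∂μ ≤ C * ∫⁻ t in Icc (x 0) (x N), g t ∂μ := by
  induction N with
  | zero => simp
  | succ n ih =>
    have hx' : ∀ k < n, x k ≤ x (k + 1) := fun k hk ↦ hx k (hk.trans n.lt_succ_self)
    have hmono : MonotoneOn x (Iic n) :=
      monotoneOn_of_le_add_one ordConnected_Iic fun k _ _ hk ↦ hx' k hk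
    have hsplit (u : ℝ → ℝ≥0∞) : ∫⁻ t in Icc (x 0) (x (n + 1)), u t ∂μ
        = ∫⁻ t in Icc (x 0) (x n), u t ∂μ + ∫⁻ t in Icc (x n) (x (n + 1)), u t ∂μ := by
      simp only [← restrict_Ioc_eq_restrict_Icc]
      rw [← Ioc_union_Ioc_eq_Ioc (hmono (mem_Iic.2 n.zero_le) self_mem_Iic n.zero_le)
          (hx n n.lt_succ_self),
        lintegral_union measurableSet_Ioc (Ioc_disjoint_Ioc_of_le le_rfl)]
    rw [hsplit, hsplit, mul_add]
    exact add_le_add (ih hx' fun k hk ↦ hfg k (hk.trans n.lt_succ_self)) (hfg n n.lt_succ_self)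

lemma hasDerivAt_of_eq_eval_on_Icc {P : ℝ[X]} {a b t : ℝ} (hP : ∀ r ∈ Icc a b, v r = P.eval r)
    (ht : t ∈ Ioo a b) : HasDerivAt v (P.derivative.eval t) t :=
  (P.hasDerivAt t).congr_of_eventuallyEq <|
    Filter.eventually_of_mem (Icc_mem_nhds ht.1 ht.2) hP

namespace IsPiecewisePolynomial

lemma differentiableAt (hv : IsPiecewisePolynomial m N x v) {t : ℝ} (ht : t ∈ Ioo (x 0) (x N))
    (htx : t ∉ range x) : DifferentiableAt ℝ v t := by
  obtain ⟨k, hk, htk⟩ := exists_mem_Ioc_succ (Ioo_subset_Ioc_self ht)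
  obtain ⟨P, -, hP⟩ := hv k hk
  have htk' : t ∈ Ioo (x k) (x (k + 1)) :=
    ⟨htk.1, htk.2.lt_of_ne fun h ↦ htx ⟨k + 1, h.symm⟩⟩
  exact (hasDerivAt_of_eq_eval_on_Icc hP htk').differentiableAt

lemma intervalIntegrable_deriv (hv : IsPiecewisePolynomial m N x v)
    (hx : ∀ k < N, x k ≤ x (k + 1)) : IntervalIntegrable (deriv v) volume (x 0) (x N) := by
  refine IntervalIntegrable.trans_iterate fun k hk ↦ ?_
  obtain ⟨P, -, hP⟩ := hv k hk
  rw [intervalIntegrable_iff_integrableOn_Ioo_of_le (hx k hk)]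
  refine IntegrableOn.congr_fun (f := fun t ↦ P.derivative.eval t) ?_
    (fun t ht ↦ (hasDerivAt_of_eq_eval_on_Icc hP ht).deriv.symm) measurableSet_Ioo
  exact (P.derivative.continuous.integrableOn_Icc).mono_set Ioo_subset_Icc_self

theorem enorm_sub_le_lintegral_deriv (hv : IsPiecewisePolynomial m N x v)
    (hx : ∀ k < N, x k ≤ x (k + 1)) (hcont : ContinuousOn v (Icc (x 0) (x N))) {r t : ℝ}
    (hr : r ∈ Icc (x 0) (x N)) (ht : t ∈ Icc (x 0) (x N)) :
    ‖v t - v r‖ₑ ≤ ∫⁻ τ in uIcc r t, ‖deriv v τ‖ₑ := by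
  have hsub : uIcc r t ⊆ Icc (x 0) (x N) := uIcc_subset_Icc hr ht
  have hint : IntervalIntegrable (deriv v) volume r t :=
    (hv.intervalIntegrable_deriv hx).mono_set (hsub.trans Icc_subset_uIcc)
  have hderiv : ∀ τ ∈ Ioo (min r t) (max r t) \ range x, HasDerivAt v (deriv v τ) τ :=
    fun τ hτ ↦ (hv.differentiableAt
      ⟨(le_min hr.1 ht.1).trans_lt hτ.1.1, hτ.1.2.trans_le (max_le hr.2 ht.2)⟩ hτ.2).hasDerivAt
  rw [← integral_eq_of_hasDerivAt_off_countable v (deriv v) (countable_range x)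
    (hcont.mono hsub) hderiv hint, ← enorm_norm,
    intervalIntegral.norm_intervalIntegral_eq, enorm_norm]
  exact (enorm_integral_le_lintegral_enorm _).trans (lintegral_mono_set uIoc_subset_uIcc)

end IsPiecewisePolynomial

theorem exists_lintegral_deriv_le {p : ℝ} (hp : 1 ≤ p) (m : ℕ) :
    ∃ C : ℝ≥0, ∀ (N : ℕ) (x : ℕ → ℝ) (h : ℝ) (v : ℝ → ℝ), 0 < h →
      (∀ k < N, h ≤ x (k + 1) - x k) → IsPiecewisePolynomial m N x v →
      ∫⁻ t in Icc (x 0) (x N), ‖deriv v t‖ₑ ^ p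
        ≤ C * ENNReal.ofReal h ^ (-p) * ∫⁻ t in Icc (x 0) (x N), ‖v t‖ₑ ^ p := by
  obtain ⟨C, hC⟩ := exists_lintegral_eval_derivative_le hp m
  refine ⟨C, fun N x h v hh hx hv ↦ lintegral_Icc_le_of_forall_cell
    (fun k hk ↦ by linarith [hx k hk]) fun k hk ↦ ?_⟩
  obtain ⟨P, hPm, hP⟩ := hv k hk
  have hderiv : ∫⁻ t in Icc (x k) (x (k + 1)), ‖deriv v t‖ₑ ^ p
      = ∫⁻ t in Icc (x k) (x (k + 1)), ‖P.derivative.eval t‖ₑ ^ p := by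
    simp only [← restrict_Ioo_eq_restrict_Icc]
    exact setLIntegral_congr_fun measurableSet_Ioo fun t ht ↦ by
      simp only [(hasDerivAt_of_eq_eval_on_Icc hP ht).deriv]
  have hvalue : ∫⁻ t in Icc (x k) (x (k + 1)), ‖v t‖ₑ ^ p
      = ∫⁻ t in Icc (x k) (x (k + 1)), ‖P.eval t‖ₑ ^ p :=
    setLIntegral_congr_fun measurableSet_Icc fun t ht ↦ by simp only [hP t ht]
  rw [hderiv, hvalue]
  refine (hC P hPm _ _ (by linarith [hx k hk])).trans ?_
  simp only [ENNReal.rpow_neg]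
  gcongr
  exact hx k hk

end Mesh

section Gagliardo

variable {E : Type*} [NormedAddCommGroup E]

/-- The `p`-th power `[v]_{W^{s,p}(I)}^p` of the Gagliardo seminorm on `I ⊆ ℝ`, as an extended
nonnegative number. The diagonal contributes `0 / 0 = 0`. -/
noncomputable def gagliardoEnergy (s p : ℝ) (I : Set ℝ) (v : ℝ → E) : ℝ≥0∞ :=
  ∫⁻ x in I, ∫⁻ y in I, ‖v x - v y‖ₑ ^ p / ‖x - y‖ₑ ^ (1 + s * p)

/-- The `p`-th power of the `L^p` norm of the increment `v (· + r) - v` over those points of `I`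
that the translation by `r` keeps in `I`. -/
noncomputable def shiftEnergy (p : ℝ) (I : Set ℝ) (v : ℝ → E) (r : ℝ) : ℝ≥0∞ :=
  ∫⁻ x in I ∩ (· + r) ⁻¹' I, ‖v (x + r) - v x‖ₑ ^ p

variable {s p h : ℝ} {I : Set ℝ} {v : ℝ → E}

lemma lintegral_lintegral_eq_lintegral_lintegral_add {G : Type*} [AddGroup G] [MeasurableSpace G]
    [MeasurableAdd₂ G] {μ : Measure G} [SFinite μ] [μ.IsAddLeftInvariant] {F : G × G → ℝ≥0∞}
    (hF : AEMeasurable F (μ.prod μ)) :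
    ∫⁻ x, ∫⁻ y, F (x, y) ∂μ ∂μ = ∫⁻ r, ∫⁻ x, F (x, x + r) ∂μ ∂μ := by
  have hshear : AEMeasurable (fun z : G × G ↦ F (z.1, z.1 + z.2)) (μ.prod μ) :=
    hF.comp_quasiMeasurePreserving (measurePreserving_prod_add μ μ).quasiMeasurePreserving
  rw [lintegral_lintegral_swap (f := fun r x ↦ F (x, x + r)) hshear.prod_swap]
  exact lintegral_congr fun x ↦ (lintegral_add_left_eq_self (fun y ↦ F (x, y)) x).symm

lemma setLIntegral_div_eq_shiftEnergy_div {r : ℝ} (hr : r ≠ 0) :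
    ∫⁻ x in I ∩ (· + r) ⁻¹' I, ‖v x - v (x + r)‖ₑ ^ p / ‖x - (x + r)‖ₑ ^ (1 + s * p)
      = shiftEnergy p I v r / ‖r‖ₑ ^ (1 + s * p) := by
  have hweight : (‖r‖ₑ ^ (1 + s * p))⁻¹ ≠ ∞ :=
    ENNReal.inv_ne_top.2 (ENNReal.rpow_pos (enorm_pos.2 hr) enorm_ne_top).ne'
  simp only [sub_add_cancel_left, enorm_neg, div_eq_mul_inv, enorm_sub_rev (v _) (v (_ + r))]
  exact lintegral_mul_const' _ _ hweight

lemma gagliardoEnergy_eq_lintegral_shiftEnergy (hI : MeasurableSet I)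
    (hv : AEStronglyMeasurable v (volume.restrict I)) :
    gagliardoEnergy s p I v = ∫⁻ r, shiftEnergy p I v r / ‖r‖ₑ ^ (1 + s * p) := by
  let F : ℝ × ℝ → ℝ≥0∞ := (I ×ˢ I).indicator fun z ↦
    ‖v z.1 - v z.2‖ₑ ^ p / ‖z.1 - z.2‖ₑ ^ (1 + s * p)
  have hF : AEMeasurable F (volume.prod volume) := by
    refine (aemeasurable_indicator_iff (hI.prod hI)).2 ?_
    rw [← Measure.prod_restrict]
    exact ((hv.comp_fst.sub hv.comp_snd).enorm.pow_const p).div (by fun_prop)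
  have hdouble : gagliardoEnergy s p I v = ∫⁻ x, ∫⁻ y, F (x, y) := by
    rw [gagliardoEnergy, ← lintegral_indicator hI]
    refine lintegral_congr fun x ↦ ?_
    by_cases hx : x ∈ I
    · rw [indicator_of_mem hx, ← lintegral_indicator hI]
      exact lintegral_congr fun y ↦ by by_cases hy : y ∈ I <;> simp [F, hx, hy]
    · simp [F, hx]
  rw [hdouble, lintegral_lintegral_eq_lintegral_lintegral_add hF]
  refine lintegral_congr_ae ?_
  filter_upwards [Measure.ae_ne volume 0] with r hr
  rw [← setLIntegral_div_eq_shiftEnergy_div hr,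
    ← lintegral_indicator (hI.inter (measurable_add_const r hI))]
  exact lintegral_congr fun x ↦ by
    by_cases hx : x ∈ I <;> by_cases hxr : x + r ∈ I <;> simp [F, hx, hxr]

lemma rpow_sub_one_mul_self (hp : 1 ≤ p) (a : ℝ≥0∞) : a ^ (p - 1) * a = a ^ p := by
  nth_rw 2 [← ENNReal.rpow_one a]
  rw [← ENNReal.rpow_add_of_nonneg _ _ (sub_nonneg.2 hp) zero_le_one, sub_add_cancel]

lemma enorm_sub_rpow_le (hp : 1 ≤ p) (a b : E) :
    ‖a - b‖ₑ ^ p ≤ 2 ^ (p - 1) * (‖a‖ₑ ^ p + ‖b‖ₑ ^ p) :=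
  (ENNReal.rpow_le_rpow enorm_sub_le (by linarith)).trans
    (ENNReal.rpow_add_le_mul_rpow_add_rpow _ _ hp)

lemma setLIntegral_comp_add_right {G : Type*} [AddGroup G] [MeasurableSpace G] [MeasurableAdd G]
    {μ : Measure G} [μ.IsAddRightInvariant] (f : G → ℝ≥0∞) (S : Set G) (r : G) :
    ∫⁻ x in (· + r) ⁻¹' S, f (x + r) ∂μ = ∫⁻ x in S, f x ∂μ :=
  (measurePreserving_add_right μ r).setLIntegral_comp_preimage_emb
    (MeasurableEquiv.addRight r).measurableEmbedding f S

lemma shiftEnergy_le_mul_lintegral_enorm (hp : 1 ≤ p)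
    (hv : AEStronglyMeasurable v (volume.restrict I)) (r : ℝ) :
    shiftEnergy p I v r ≤ 2 ^ p * ∫⁻ x in I, ‖v x‖ₑ ^ p := by
  set J := I ∩ (· + r) ⁻¹' I
  have hvJ : AEMeasurable (fun x ↦ ‖v x‖ₑ ^ p) (volume.restrict J) :=
    ((hv.mono_set inter_subset_left).enorm).pow_const p
  calc shiftEnergy p I v r
      ≤ ∫⁻ x in J, 2 ^ (p - 1) * (‖v (x + r)‖ₑ ^ p + ‖v x‖ₑ ^ p) :=
        lintegral_mono fun x ↦ enorm_sub_rpow_le hp _ _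
    _ = 2 ^ (p - 1) * ((∫⁻ x in J, ‖v (x + r)‖ₑ ^ p) + ∫⁻ x in J, ‖v x‖ₑ ^ p) := by
        rw [lintegral_const_mul' _ _ (by simp), lintegral_add_right' _ hvJ]
    _ ≤ 2 ^ (p - 1) * ((∫⁻ x in I, ‖v x‖ₑ ^ p) + ∫⁻ x in I, ‖v x‖ₑ ^ p) := by
        gcongr 2 ^ (p - 1) * (?_ + ?_)
        · exact (lintegral_mono_set inter_subset_right).trans_eq
            (setLIntegral_comp_add_right (fun x ↦ ‖v x‖ₑ ^ p) I r)
        · exact lintegral_mono_set inter_subset_left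
    _ = 2 ^ p * ∫⁻ x in I, ‖v x‖ₑ ^ p := by
        rw [← two_mul, ← mul_assoc, rpow_sub_one_mul_self hp]

lemma lintegral_rpow_le_measure_rpow_mul_lintegral {α : Type*} [MeasurableSpace α]
    {μ : Measure α} {g : α → ℝ≥0∞} (hp : 1 ≤ p) (hg : AEMeasurable g μ) :
    (∫⁻ a, g a ∂μ) ^ p ≤ μ univ ^ (p - 1) * ∫⁻ a, g a ^ p ∂μ := by
  have hp0 : 0 < p := by linarith
  have hholder := eLpNorm'_le_eLpNorm'_mul_rpow_measure_univ one_pos hp hg.aestronglyMeasurable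
  simp only [eLpNorm'_eq_lintegral_enorm, enorm_eq_self, ENNReal.rpow_one, one_div_one] at hholder
  calc (∫⁻ a, g a ∂μ) ^ p
      ≤ ((∫⁻ a, g a ^ p ∂μ) ^ (1 / p) * μ univ ^ (1 - 1 / p)) ^ p := by gcongr
    _ = μ univ ^ (p - 1) * ∫⁻ a, g a ^ p ∂μ := by
        rw [ENNReal.mul_rpow_of_nonneg _ _ hp0.le, ← ENNReal.rpow_mul, ← ENNReal.rpow_mul,
          one_div_mul_cancel hp0.ne', ENNReal.rpow_one, sub_mul, one_div_mul_cancel hp0.ne',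
          one_mul, mul_comm]

lemma setLIntegral_uIcc_add_right (f : ℝ → ℝ≥0∞) (x r : ℝ) :
    ∫⁻ t in uIcc x (x + r), f t = ∫⁻ u in uIcc 0 r, f (x + u) := by
  have hpre : (x + ·) ⁻¹' uIcc x (x + r) = uIcc 0 r := by simp
  rw [← hpre]
  exact ((measurePreserving_add_left volume x).setLIntegral_comp_preimage_emb
    (MeasurableEquiv.addLeft x).measurableEmbedding f _).symm

lemma shiftEnergy_le_enorm_rpow_mul_lintegral (hp : 1 ≤ p) (hI : MeasurableSet I)
    (hIc : OrdConnected I) {g : ℝ → ℝ≥0∞} (hg : Measurable g)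
    (hgrad : ∀ x ∈ I, ∀ y ∈ I, ‖v y - v x‖ₑ ≤ ∫⁻ t in uIcc x y, g t) (r : ℝ) :
    shiftEnergy p I v r ≤ ‖r‖ₑ ^ p * ∫⁻ x in I, g x ^ p := by
  have hvol (x : ℝ) : volume (uIcc x (x + r)) = ‖r‖ₑ := by
    rw [Real.volume_interval, add_sub_cancel_left, Real.enorm_eq_ofReal_abs]
  let G : ℝ → ℝ≥0∞ := I.indicator fun t ↦ g t ^ p
  have hG : Measurable fun z : ℝ × ℝ ↦ G (z.1 + z.2) :=
    ((hg.pow_const p).indicator hI).comp measurable_add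
  have hpoint : ∀ x ∈ I ∩ (· + r) ⁻¹' I,
      ‖v (x + r) - v x‖ₑ ^ p ≤ ‖r‖ₑ ^ (p - 1) * ∫⁻ u in uIcc 0 r, G (x + u) := by
    rintro x ⟨hx, hxr⟩
    calc ‖v (x + r) - v x‖ₑ ^ p ≤ (∫⁻ t in uIcc x (x + r), g t) ^ p := by
          gcongr
          exact hgrad x hx _ hxr
      _ ≤ ‖r‖ₑ ^ (p - 1) * ∫⁻ t in uIcc x (x + r), g t ^ p := by
          simpa [hvol] using lintegral_rpow_le_measure_rpow_mul_lintegral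
            (μ := volume.restrict (uIcc x (x + r))) hp hg.aemeasurable
      _ = ‖r‖ₑ ^ (p - 1) * ∫⁻ u in uIcc 0 r, G (x + u) := by
          rw [← setLIntegral_uIcc_add_right, setLIntegral_congr_fun measurableSet_uIcc]
          exact fun t ht ↦ by simp [G, hIc.uIcc_subset hx hxr ht]
  calc shiftEnergy p I v r
      ≤ ∫⁻ x, ‖r‖ₑ ^ (p - 1) * ∫⁻ u in uIcc 0 r, G (x + u) :=
        (setLIntegral_mono' (hI.inter (measurable_add_const r hI)) hpoint).trans
          (setLIntegral_le_lintegral _ _)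
    _ = ‖r‖ₑ ^ (p - 1) * ∫⁻ u in uIcc 0 r, ∫⁻ x, G (x + u) := by
        rw [lintegral_const_mul _ hG.lintegral_prod_right',
          lintegral_lintegral_swap hG.aemeasurable]
    _ = ‖r‖ₑ ^ (p - 1) * ‖r‖ₑ * ∫⁻ x in I, g x ^ p := by
        simp only [lintegral_add_right_eq_self, G, lintegral_indicator hI, setLIntegral_const]
        rw [mul_assoc, mul_comm (∫⁻ x in I, g x ^ p), ← hvol 0, zero_add]
    _ = ‖r‖ₑ ^ p * ∫⁻ x in I, g x ^ p := by
        rw [rpow_sub_one_mul_self hp]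

lemma lintegral_comp_abs (g : ℝ → ℝ≥0∞) : ∫⁻ r, g |r| = 2 * ∫⁻ r in Ioi 0, g r := by
  have hpos : ∫⁻ r in Ioi 0, g |r| = ∫⁻ r in Ioi 0, g r :=
    setLIntegral_congr_fun measurableSet_Ioi fun r hr ↦ by rw [abs_of_pos hr]
  have hneg : ∫⁻ r in Iio 0, g |r| = ∫⁻ r in Ioi 0, g |r| := by
    simpa using (Measure.measurePreserving_neg (volume : Measure ℝ)).setLIntegral_comp_preimage_emb
      (MeasurableEquiv.neg ℝ).measurableEmbedding (fun r ↦ g |r|) (Ioi 0)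
  rw [← lintegral_add_compl _ (measurableSet_Ioi (a := (0 : ℝ))), compl_Ioi,
    ← restrict_Iio_eq_restrict_Iic, hneg, hpos, two_mul]

lemma setLIntegral_preimage_abs_enorm_rpow {S : Set ℝ} (hS : MeasurableSet S) {q : ℝ}
    (hint : IntegrableOn (fun r : ℝ ↦ r ^ q) (S ∩ Ioi 0)) :
    ∫⁻ r in abs ⁻¹' S, ‖r‖ₑ ^ q = 2 * ENNReal.ofReal (∫ r in S ∩ Ioi 0, r ^ q) := by
  have hpos : ∀ r ∈ S ∩ Ioi 0, 0 < r := fun _ hr ↦ hr.2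
  have hS0 : MeasurableSet (S ∩ Ioi 0) := hS.inter measurableSet_Ioi
  have habs (r : ℝ) : (abs ⁻¹' S).indicator (fun r ↦ ‖r‖ₑ ^ q) r
      = S.indicator (fun r ↦ ‖r‖ₑ ^ q) |r| := by
    by_cases hr : |r| ∈ S <;> simp [hr]
  rw [← lintegral_indicator (measurable_abs hS), lintegral_congr habs, lintegral_comp_abs,
    setLIntegral_indicator hS, ofReal_integral_eq_lintegral_ofReal hint
      ((ae_restrict_iff' hS0).2 (.of_forall fun r hr ↦ Real.rpow_nonneg (hpos r hr).le q))]
  congr 1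
  exact setLIntegral_congr_fun hS0 fun r hr ↦ by
    simp only [Real.enorm_eq_ofReal (hpos r hr).le, ENNReal.ofReal_rpow_of_pos (hpos r hr)]

lemma setLIntegral_preimage_abs_Iio_enorm_rpow (hh : 0 < h) {q : ℝ} (hq : -1 < q) :
    ∫⁻ r in abs ⁻¹' Iio h, ‖r‖ₑ ^ q = 2 * ENNReal.ofReal (h ^ (q + 1) / (q + 1)) := by
  have hset : Iio h ∩ Ioi 0 = Ioo 0 h := by rw [inter_comm, Ioi_inter_Iio]
  rw [setLIntegral_preimage_abs_enorm_rpow measurableSet_Iio, hset,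
    ← integral_Ioc_eq_integral_Ioo, ← intervalIntegral.integral_of_le hh.le,
    integral_rpow (.inl hq), Real.zero_rpow (by linarith), sub_zero]
  rw [hset, ← intervalIntegrable_iff_integrableOn_Ioo_of_le hh.le]
  exact intervalIntegral.intervalIntegrable_rpow' hq

lemma setLIntegral_preimage_abs_Ici_enorm_rpow (hh : 0 < h) {q : ℝ} (hq : q < -1) :
    ∫⁻ r in abs ⁻¹' Ici h, ‖r‖ₑ ^ q = 2 * ENNReal.ofReal (-h ^ (q + 1) / (q + 1)) := by
  have hset : Ici h ∩ Ioi 0 = Ici h := inter_eq_left.2 fun r hr ↦ hh.trans_le hr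
  rw [setLIntegral_preimage_abs_enorm_rpow measurableSet_Ici, hset, integral_Ici_eq_integral_Ioi,
    integral_Ioi_rpow_of_lt hq hh]
  rw [hset, integrableOn_Ici_iff_integrableOn_Ioi]
  exact integrableOn_Ioi_rpow_of_lt hq hh

lemma setLIntegral_preimage_abs_Iio_shiftEnergy_div_le (hs1 : s < 1) (hp : 1 ≤ p)
    (hI : MeasurableSet I) (hIc : OrdConnected I) {g : ℝ → ℝ≥0∞} (hg : Measurable g)
    (hgrad : ∀ x ∈ I, ∀ y ∈ I, ‖v y - v x‖ₑ ≤ ∫⁻ t in uIcc x y, g t) (hh : 0 < h) :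
    ∫⁻ r in abs ⁻¹' Iio h, shiftEnergy p I v r / ‖r‖ₑ ^ (1 + s * p)
      ≤ 2 * ENNReal.ofReal (h ^ (p - s * p) / (p - s * p)) * ∫⁻ x in I, g x ^ p := by
  have hsp : s * p < p := mul_lt_of_lt_one_left (by linarith) hs1
  have hkernel : ∫⁻ r in abs ⁻¹' Iio h, ‖r‖ₑ ^ (p - (1 + s * p))
      = 2 * ENNReal.ofReal (h ^ (p - s * p) / (p - s * p)) := by
    rw [setLIntegral_preimage_abs_Iio_enorm_rpow hh (by linarith)]
    ring_nf
  rw [← hkernel, ← lintegral_mul_const _ (by fun_prop)]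
  refine lintegral_mono_ae (ae_restrict_of_ae ?_)
  filter_upwards [Measure.ae_ne volume 0] with r hr
  rw [ENNReal.rpow_sub _ _ (enorm_ne_zero.2 hr) enorm_ne_top, ← ENNReal.mul_div_right_comm]
  gcongr
  exact shiftEnergy_le_enorm_rpow_mul_lintegral hp hI hIc hg hgrad r

lemma setLIntegral_preimage_abs_Ici_shiftEnergy_div_le (hs : 0 < s) (hp : 1 ≤ p)
    (hv : AEStronglyMeasurable v (volume.restrict I)) (hh : 0 < h) :
    ∫⁻ r in abs ⁻¹' Ici h, shiftEnergy p I v r / ‖r‖ₑ ^ (1 + s * p)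
      ≤ 2 * ENNReal.ofReal (h ^ (-(s * p)) / (s * p)) * (2 ^ p * ∫⁻ x in I, ‖v x‖ₑ ^ p) := by
  have hsp : 0 < s * p := by positivity
  have hkernel : ∫⁻ r in abs ⁻¹' Ici h, ‖r‖ₑ ^ (-(1 + s * p))
      = 2 * ENNReal.ofReal (h ^ (-(s * p)) / (s * p)) := by
    rw [setLIntegral_preimage_abs_Ici_enorm_rpow hh (by linarith),
      show -(1 + s * p) + 1 = -(s * p) by ring, neg_div_neg_eq]
  rw [← hkernel, ← lintegral_mul_const _ (by fun_prop)]
  refine lintegral_mono fun r ↦ ?_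
  rw [div_eq_mul_inv, ← ENNReal.rpow_neg, mul_comm]
  gcongr
  exact shiftEnergy_le_mul_lintegral_enorm hp hv r

theorem gagliardoEnergy_le_of_enorm_sub_le_lintegral (hs : 0 < s) (hs1 : s < 1) (hp : 1 ≤ p)
    (hI : MeasurableSet I) (hIc : OrdConnected I) (hv : AEStronglyMeasurable v (volume.restrict I))
    {g : ℝ → ℝ≥0∞} (hg : Measurable g)
    (hgrad : ∀ x ∈ I, ∀ y ∈ I, ‖v y - v x‖ₑ ≤ ∫⁻ t in uIcc x y, g t) (hh : 0 < h) :
    gagliardoEnergy s p I v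
      ≤ 2 * ENNReal.ofReal (h ^ (p - s * p) / (p - s * p)) * (∫⁻ x in I, g x ^ p)
        + 2 * ENNReal.ofReal (h ^ (-(s * p)) / (s * p)) * (2 ^ p * ∫⁻ x in I, ‖v x‖ₑ ^ p) := by
  have hcompl : (abs ⁻¹' Iio h)ᶜ = abs ⁻¹' Ici h := by rw [← preimage_compl, compl_Iio]
  rw [gagliardoEnergy_eq_lintegral_shiftEnergy hI hv,
    ← lintegral_add_compl _ (measurable_abs (measurableSet_Iio (a := h))), hcompl]
  exact add_le_add (setLIntegral_preimage_abs_Iio_shiftEnergy_div_le hs1 hp hI hIc hg hgrad hh)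
    (setLIntegral_preimage_abs_Ici_shiftEnergy_div_le hs hp hv hh)

end Gagliardo

section InverseInequality

lemma ofReal_rpow_div {h : ℝ} (hh : 0 < h) (a c : ℝ) :
    ENNReal.ofReal (h ^ a / c) = ENNReal.ofReal h ^ a * c⁻¹.toNNReal := by
  rw [div_eq_mul_inv, ENNReal.ofReal_mul (by positivity), ENNReal.ofReal_rpow_of_pos hh]
  rfl

theorem exists_gagliardoEnergy_le {s p : ℝ} (hs : 0 < s) (hs1 : s < 1) (hp : 1 ≤ p) (m : ℕ) :
    ∃ C : ℝ≥0, ∀ (N : ℕ) (x : ℕ → ℝ) (h : ℝ) (v : ℝ → ℝ), 0 < h →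
      (∀ k < N, h ≤ x (k + 1) - x k) → ContinuousOn v (Icc (x 0) (x N)) →
      IsPiecewisePolynomial m N x v →
      gagliardoEnergy s p (Ioo (x 0) (x N)) v
        ≤ C * ENNReal.ofReal h ^ (-(s * p)) * ∫⁻ t in Ioo (x 0) (x N), ‖v t‖ₑ ^ p := by
  obtain ⟨D, hD⟩ := exists_lintegral_deriv_le hp m
  refine ⟨2 * (p - s * p)⁻¹.toNNReal * D + 2 * (s * p)⁻¹.toNNReal * 2 ^ p,
    fun N x h v hh hx hcont hv ↦ ?_⟩
  set I := Ioo (x 0) (x N)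
  set H := ENNReal.ofReal h
  have hH : H ^ (p - s * p) * H ^ (-p) = H ^ (-(s * p)) := by
    rw [← ENNReal.rpow_add _ _ (by simpa [H]) ENNReal.ofReal_ne_top,
      show p - s * p + -p = -(s * p) by ring]
  have hgrad : ∀ r ∈ I, ∀ t ∈ I, ‖v t - v r‖ₑ ≤ ∫⁻ τ in uIcc r t, ‖deriv v τ‖ₑ :=
    fun r hr t ht ↦ hv.enorm_sub_le_lintegral_deriv (fun k hk ↦ by linarith [hx k hk]) hcont
      (Ioo_subset_Icc_self hr) (Ioo_subset_Icc_self ht)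
  have hderiv : ∫⁻ t in I, ‖deriv v t‖ₑ ^ p ≤ D * H ^ (-p) * ∫⁻ t in I, ‖v t‖ₑ ^ p := by
    simpa only [I, restrict_Ioo_eq_restrict_Icc] using hD N x h v hh hx hv
  calc gagliardoEnergy s p I v
      ≤ 2 * ENNReal.ofReal (h ^ (p - s * p) / (p - s * p)) * (∫⁻ t in I, ‖deriv v t‖ₑ ^ p)
        + 2 * ENNReal.ofReal (h ^ (-(s * p)) / (s * p)) * (2 ^ p * ∫⁻ t in I, ‖v t‖ₑ ^ p) :=
        gagliardoEnergy_le_of_enorm_sub_le_lintegral hs hs1 hp measurableSet_Ioo ordConnected_Ioo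
          ((hcont.mono Ioo_subset_Icc_self).aestronglyMeasurable measurableSet_Ioo)
          (measurable_deriv v).enorm hgrad hh
    _ ≤ 2 * (H ^ (p - s * p) * (p - s * p)⁻¹.toNNReal)
          * (D * H ^ (-p) * ∫⁻ t in I, ‖v t‖ₑ ^ p)
        + 2 * (H ^ (-(s * p)) * (s * p)⁻¹.toNNReal) * (2 ^ p * ∫⁻ t in I, ‖v t‖ₑ ^ p) := by
        rw [ofReal_rpow_div hh, ofReal_rpow_div hh]
        gcongr
    _ = _ := by
        rw [← hH]
        push_cast [ENNReal.coe_rpow_of_nonneg _ (zero_le_one.trans hp)]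
        ring

lemma enorm_abs_rpow_div_abs_rpow_le {p q : ℝ} (hp : 0 ≤ p) (hq : 0 < q) (a b : ℝ) :
    ‖|a| ^ p / |b| ^ q‖ₑ ≤ ‖a‖ₑ ^ p / ‖b‖ₑ ^ q := by
  rcases eq_or_ne b 0 with rfl | hb
  · simp [Real.zero_rpow hq.ne']
  · rw [div_eq_mul_inv, enorm_mul, enorm_inv (by positivity),
      Real.enorm_rpow_of_nonneg (abs_nonneg a) hp, Real.enorm_rpow_of_nonneg (abs_nonneg b) hq.le,
      Real.enorm_abs, Real.enorm_abs, div_eq_mul_inv]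

lemma ofReal_integral_integral_le_gagliardoEnergy {s p : ℝ} (hs : 0 ≤ s) (hp : 0 ≤ p) (I : Set ℝ)
    (v : ℝ → ℝ) :
    ENNReal.ofReal (∫ x in I, ∫ y in I, |v x - v y| ^ p / |x - y| ^ (1 + s * p))
      ≤ gagliardoEnergy s p I v := by
  rw [← Real.enorm_eq_ofReal
    (integral_nonneg fun x ↦ integral_nonneg fun y ↦ by positivity)]
  refine (enorm_integral_le_lintegral_enorm _).trans (lintegral_mono fun x ↦ ?_)
  refine (enorm_integral_le_lintegral_enorm _).trans (lintegral_mono fun y ↦ ?_)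
  exact enorm_abs_rpow_div_abs_rpow_le hp (by positivity) _ _

lemma setLIntegral_Ioo_enorm_rpow_eq_ofReal {p : ℝ} (hp : 0 ≤ p) {a b : ℝ} {v : ℝ → ℝ}
    (hv : ContinuousOn v (Icc a b)) :
    ∫⁻ t in Ioo a b, ‖v t‖ₑ ^ p = ENNReal.ofReal (∫ t in Ioo a b, |v t| ^ p) := by
  have hint : IntegrableOn (fun t ↦ |v t| ^ p) (Ioo a b) :=
    ((hv.abs.rpow_const fun _ _ ↦ .inr hp).integrableOn_Icc).mono_set Ioo_subset_Icc_self
  rw [ofReal_integral_eq_lintegral_ofReal hint (.of_forall fun t ↦ by positivity)]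
  simp only [Real.enorm_eq_ofReal_abs, ENNReal.ofReal_rpow_of_nonneg (abs_nonneg _) hp]

theorem stmt_7_general {s p : ℝ} (hs : 0 < s) (hs1 : s < 1) (hp : 1 ≤ p) (m : ℕ) :
    ∃ C > 0, ∀ (N : ℕ) (x : ℕ → ℝ) (h : ℝ) (v : ℝ → ℝ), 0 < h →
      (∀ k < N, h ≤ x (k + 1) - x k) → ContinuousOn v (Icc (x 0) (x N)) →
      IsPiecewisePolynomial m N x v →
      (∫ r in Ioo (x 0) (x N), ∫ t in Ioo (x 0) (x N),
          |v r - v t| ^ p / |r - t| ^ (1 + s * p)) ^ (1 / p)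
        ≤ C * h ^ (-s) * (∫ t in Ioo (x 0) (x N), |v t| ^ p) ^ (1 / p) := by
  have hp0 : 0 < p := by linarith
  obtain ⟨C, hC⟩ := exists_gagliardoEnergy_le hs hs1 hp m
  refine ⟨(C + 1) ^ (1 / p), by positivity, fun N x h v hh hx hcont hv ↦ ?_⟩
  set I := Ioo (x 0) (x N)
  set S := ∫ r in I, ∫ t in I, |v r - v t| ^ p / |r - t| ^ (1 + s * p)
  set L := ∫ t in I, |v t| ^ p
  have hL : 0 ≤ L := integral_nonneg fun t ↦ by positivity
  have hSL : S ≤ C * h ^ (-(s * p)) * L := by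
    have henergy := (ofReal_integral_integral_le_gagliardoEnergy hs.le hp0.le I v).trans
      (hC N x h v hh hx hcont hv)
    rwa [setLIntegral_Ioo_enorm_rpow_eq_ofReal hp0.le hcont, ENNReal.ofReal_rpow_of_pos hh,
      ← ENNReal.ofReal_coe_nnreal, ← ENNReal.ofReal_mul (by positivity),
      ← ENNReal.ofReal_mul (by positivity), ENNReal.ofReal_le_ofReal_iff (by positivity)]
      at henergy
  calc S ^ (1 / p) ≤ ((C + 1) * h ^ (-(s * p)) * L) ^ (1 / p) := by
        gcongr
        exact hSL.trans (by gcongr; linarith)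
    _ = (C + 1) ^ (1 / p) * h ^ (-s) * L ^ (1 / p) := by
        rw [Real.mul_rpow (by positivity) hL, Real.mul_rpow (by positivity) (by positivity),
          ← Real.rpow_mul hh.le, show -(s * p) * (1 / p) = -s by field_simp]

end InverseInequality

/-- Fractional inverse inequality in 1D: for `0 < s < 1`, `1 ≤ p < ∞` with `sp < 1`,
there is `C > 0` (independent of the mesh size `h = 1/N` and of `v`) such that every
continuous piecewise polynomial `v` of degree at most `m` on the uniform mesh satisfies
`[v]_{W^{s,p}(0,1)} ≤ C h^{-s} ‖v‖_{L^p(0,1)}`. -/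
theorem stmt_7 (s p : ℝ) (m : ℕ) (hs : 0 < s) (hs1 : s < 1) (hp : 1 ≤ p)
    (hsp : s * p < 1) :
    ∃ C > 0, ∀ (N : ℕ) (h : ℝ) (v : ℝ → ℝ), 0 < N → h = 1 / (N : ℝ) →
      ContinuousOn v (Icc 0 1) →
      (∀ k : ℕ, k < N → ∃ P : Polynomial ℝ, P.natDegree ≤ m ∧
        ∀ x ∈ Icc ((k : ℝ) * h) (((k : ℝ) + 1) * h), v x = P.eval x) →
      (∫ x in Ioo (0:ℝ) 1, ∫ y in Ioo (0:ℝ) 1,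
          |v x - v y| ^ p / |x - y| ^ (1 + s * p)) ^ (1/p)
        ≤ C * h ^ (-s) * (∫ x in Ioo (0:ℝ) 1, |v x| ^ p) ^ (1/p) := by
  obtain ⟨C, hC, hbound⟩ := stmt_7_general hs hs1 hp m
  refine ⟨C, hC, fun N h v hN hh hcont hv ↦ ?_⟩
  have hNh : (N : ℝ) * h = 1 := by rw [hh]; field_simp
  have hpiecewise : IsPiecewisePolynomial m N (fun k ↦ k * h) v := by
    simpa [IsPiecewisePolynomial] using hv
  simpa [hNh] using hbound N (fun k ↦ k * h) h v (by rw [hh]; positivity)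
    (fun k _ ↦ by push_cast; linarith) (by simpa [hNh] using hcont) hpiecewise
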